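/- Let (m₁,m₂,m₃,ξ,p) be a collision solution of the reduced two-body system on [t₀, t*) with t* < ∞ and ξ(t) → +∞ as t → t*⁻. Then the projection of the solution curve onto the Casimir sphere {m₁² + m₂² + m₃² = C} has finite length: the integral ∫_{t₀}^{t*} √(m₁'(t)² + m₂'(t)² + m₃'(t)²) dt is finite. -/

import Mathlib

open Filter Set

lemma aux_const (a b : ℝ) (f : ℝ → ℝ) (hf : ∀ t ∈ Set.Ico a b, HasDerivAt f 0 t) :
    ∀ t ∈ Set.Ico a b, f t = f a := by
  intro t ht
  have h := constant_of_has_deriv_right_zero (f := f) (a := a) (b := t)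
    (fun x hx => (hf x ⟨hx.1, lt_of_le_of_lt hx.2 ht.2⟩).continuousAt.continuousWithinAt)
    (fun x hx => (hf x ⟨hx.1, hx.2.trans ht.2⟩).hasDerivWithinAt)
  exact h t ⟨ht.1, le_rfl⟩

lemma aux_min (a b : ℝ) (hab : a < b) (f : ℝ → ℝ) (hf : ∀ t ∈ Set.Ico a b, ContinuousAt f t)
    (hcoll : Tendsto f (nhdsWithin b (Set.Iio b)) atTop) :
    ∃ s ∈ Set.Ico a b, ∀ r ∈ Set.Ico a b, f s ≤ f r := by
  have h1 := hcoll.eventually (eventually_ge_atTop (f a))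
  rw [eventually_iff, mem_nhdsLT_iff_exists_Ioo_subset] at h1
  obtain ⟨l, hl, hsub⟩ := h1
  have hl : l < b := hl
  have hc : max a l < b := max_lt hab hl
  obtain ⟨s, hs, hmin⟩ := (isCompact_Icc (a := a) (b := max a l)).exists_isMinOn
    ⟨a, le_rfl, le_max_left _ _⟩
    (fun x hx => (hf x ⟨hx.1, lt_of_le_of_lt hx.2 hc⟩).continuousWithinAt)
  refine ⟨s, ⟨hs.1, lt_of_le_of_lt hs.2 hc⟩, fun r hr => ?_⟩
  by_cases h : r ≤ max a l
  · exact hmin ⟨hr.1, h⟩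
  · push Not at h
    have h2 : f s ≤ f a := hmin ⟨le_rfl, le_max_left _ _⟩
    have h3 : f a ≤ f r := hsub ⟨lt_of_le_of_lt (le_max_right _ _) h, hr.2⟩
    exact h2.trans h3

/-- algebraic bound on the derivative of `w / xi` -/
lemma aux_alg (u w a b x M : ℝ) (hM : M ^ 2 ≤ x) (ha : a ^ 2 ≤ M ^ 2) (hb : b ^ 2 ≤ M ^ 2)
    (h : u ^ 2 + w ^ 2 ≤ 2 * x) :
    |2 * w * u + (w + b / 2) * (a / 4 - 3 * u / 2)| ≤ 7 * x := by
  rw [abs_le]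
  constructor <;>
  nlinarith [sq_nonneg (w + u), sq_nonneg (w - u), sq_nonneg ((w + b / 2) + (a / 4 - 3 * u / 2)),
    sq_nonneg ((w + b / 2) - (a / 4 - 3 * u / 2)), sq_nonneg (w - b / 2),
    sq_nonneg (a / 4 + 3 * u / 2), sq_nonneg u, sq_nonneg w]

lemma aux_limit (s b K : ℝ) (hs : s < b) (hK : 0 ≤ K) (L L' : ℝ → ℝ)
    (hL : ∀ t ∈ Set.Ico s b, HasDerivAt L (L' t) t) (hb : ∀ t ∈ Set.Ico s b, |L' t| ≤ K)
    (h0 : Tendsto L (nhdsWithin b (Set.Iio b)) (nhds 0)) : |L s| ≤ K * (b - s) := by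
  have h1 : ∀ r ∈ Set.Ioo s b, |L r - L s| ≤ K * (b - s) := by
    intro r hr
    have h := Convex.norm_image_sub_le_of_norm_hasDerivWithin_le (f := L) (f' := L')
      (s := Set.Ico s b) (C := K) (x := s) (y := r)
      (fun x hx => (hL x hx).hasDerivWithinAt) (fun x hx => hb x hx) (convex_Ico s b)
      ⟨le_rfl, hs⟩ ⟨hr.1.le, hr.2⟩
    rw [Real.norm_eq_abs, Real.norm_eq_abs, abs_of_pos (sub_pos.2 hr.1)] at h
    exact h.trans (mul_le_mul_of_nonneg_left (by linarith [hr.2]) hK)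
  have h2 : Tendsto (fun r => |L r - L s|) (nhdsWithin b (Set.Iio b)) (nhds |0 - L s|) :=
    (h0.sub_const _).abs
  have h3 := le_of_tendsto h2 (by
    filter_upwards [Ioo_mem_nhdsLT hs] with r hr using h1 r hr)
  simpa using h3

lemma aux_integrable (a b : ℝ) (_hab : a < b) (g g' : ℝ → ℝ)
    (hg : ∀ t ∈ Set.Ico a b, HasDerivAt g (g' t) t) (hpos : ∀ t ∈ Set.Ico a b, 0 ≤ g' t)
    (h0 : Tendsto g (nhdsWithin b (Set.Iio b)) (nhds 0)) :
    MeasureTheory.IntegrableOn g' (Set.Ioo a b) := by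
  have hev : ∀ t ∈ Set.Ico a b, Function.update g b 0 =ᶠ[nhds t] g := by
    intro t ht
    filter_upwards [Iio_mem_nhds ht.2] with x hx
    exact Function.update_of_ne (ne_of_lt hx) _ _
  have h := intervalIntegral.integrableOn_deriv_of_nonneg (g := Function.update g b 0) (g' := g')
    (a := a) (b := b) ?_ ?_ ?_
  · exact h.mono_set Set.Ioo_subset_Ioc_self
  · rw [continuousOn_update_iff]
    constructor
    · intro x hx
      have hx' : x ∈ Set.Ico a b := ⟨hx.1.1, lt_of_le_of_ne hx.1.2 hx.2⟩
      exact (hg x hx').continuousAt.continuousWithinAt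
    · intro _
      refine h0.mono_left (nhdsWithin_mono _ ?_)
      intro x hx
      exact lt_of_le_of_ne hx.1.2 hx.2
  · intro x hx
    exact (hg x ⟨hx.1.le, hx.2⟩).congr_of_eventuallyEq (hev x ⟨hx.1.le, hx.2⟩)
  · intro x hx
    exact hpos x ⟨hx.1.le, hx.2⟩

lemma aux_bound (a b c w p x M W u : ℝ) (hM : 0 ≤ M) (hx : 1 ≤ x) 
    (ha : |a| ≤ M) (hb : |b| ≤ M) (hc : |c| ≤ M) (hw : |w| ≤ W) (hu : u ^ 2 ≤ 2 * x)
    (hpu : p = u + a / 2) (hwx : w = c * x - b / 2) :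
    Real.sqrt ((x * (-b ^ 2 + c ^ 2 + 2 * b * c * x)) ^ 2
      + (a * b * x - c * p - 2 * a * c * x ^ 2) ^ 2 + (b * p - a * c * x) ^ 2)
      ≤ (4 * M * W + 4 * M ^ 2 + 4 * M) * x := by
  have hW : 0 ≤ W := (abs_nonneg _).trans hw
  have hp : |p| ≤ (2 + M) * x := by
    have : |u| ≤ 2 * x := by
      apply abs_le_of_sq_le_sq _ (by linarith)
      nlinarith
    rw [hpu]
    refine (abs_add_le _ _).trans ?_
    rw [abs_div, abs_two]
    nlinarith
  have mulb : ∀ y z Y Z : ℝ, |y| ≤ Y → |z| ≤ Z → |y * z| ≤ Y * Z := by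
    intro y z Y Z h1 h2
    rw [abs_mul]
    exact mul_le_mul h1 h2 (abs_nonneg _) ((abs_nonneg _).trans h1)
  have hbw := abs_le.1 (mulb _ _ _ _ hb hw)
  have hcc := abs_le.1 (mulb _ _ _ _ hc hc)
  have haw := abs_le.1 (mulb _ _ _ _ ha hw)
  have hac := abs_le.1 (mulb _ _ _ _ ha hc)
  have hcp := abs_le.1 (mulb _ _ _ _ hc hp)
  have hbp := abs_le.1 (mulb _ _ _ _ hb hp)
  have e1 : x * (-b ^ 2 + c ^ 2 + 2 * b * c * x) = x * (2 * (b * w) + c * c) := by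
    rw [hwx]; ring
  have e2 : a * b * x - c * p - 2 * a * c * x ^ 2 = - (c * p) - 2 * (a * w) * x := by
    rw [hwx]; ring
  have e3 : b * p - a * c * x = b * p - (a * c) * x := by ring
  have b1 : |x * (2 * (b * w) + c * c)| ≤ x * (2 * (M * W) + M * M) := by
    rw [abs_mul, abs_of_nonneg (by linarith : (0:ℝ) ≤ x)]
    apply mul_le_mul_of_nonneg_left _ (by linarith)
    rw [abs_le]; constructor <;> linarith
  have b2 : |- (c * p) - 2 * (a * w) * x| ≤ M * ((2 + M) * x) + 2 * (M * W) * x := by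
    rw [abs_le]; constructor <;> nlinarith
  have b3 : |b * p - (a * c) * x| ≤ M * ((2 + M) * x) + (M * M) * x := by
    rw [abs_le]; constructor <;> nlinarith
  rw [e1, e2, e3]
  apply Real.sqrt_le_iff.2
  constructor
  · have : 0 ≤ x := by linarith
    positivity
  · generalize x * (2 * (b * w) + c * c) = X at *
    generalize - (c * p) - 2 * (a * w) * x = Y at *
    generalize b * p - (a * c) * x = Z at *
    have hs : |X| + |Y| + |Z| ≤ (4 * M * W + 4 * M ^ 2 + 4 * M) * x := by
      refine (add_le_add (add_le_add b1 b2) b3).trans (le_of_eq ?_)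
      ring
    have h0 : X ^ 2 + Y ^ 2 + Z ^ 2 ≤ (|X| + |Y| + |Z|) ^ 2 := by
      rw [← sq_abs X, ← sq_abs Y, ← sq_abs Z]
      nlinarith [mul_nonneg (abs_nonneg X) (abs_nonneg Y), mul_nonneg (abs_nonneg X) (abs_nonneg Z),
        mul_nonneg (abs_nonneg Y) (abs_nonneg Z)]
    exact h0.trans (pow_le_pow_left₀ (by positivity) hs 2)

/-- Along a collision solution with `t* < ∞` and `ξ(t) → +∞` as `t → t*⁻`, the
projection of the solution curve onto the Casimir sphere has finite length: the
integral `∫_{t₀}^{t*} √(m₁\'(t)² + m₂\'(t)² + m₃\'(t)²) dt` is finite. -/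
theorem finite_length_on_casimir_sphere
    (t0 tstar : ℝ) (ht0 : t0 < tstar)
    (m1 m2 m3 xi p : ℝ → ℝ)
    (hm1 : ∀ t ∈ Set.Ico t0 tstar,
      HasDerivAt m1 (xi t * (-(m2 t)^2 + (m3 t)^2 + 2 * m2 t * m3 t * xi t)) t)
    (hm2 : ∀ t ∈ Set.Ico t0 tstar,
      HasDerivAt m2 (m1 t * m2 t * xi t - m3 t * p t - 2 * m1 t * m3 t * (xi t)^2) t)
    (hm3 : ∀ t ∈ Set.Ico t0 tstar,
      HasDerivAt m3 (m2 t * p t - m1 t * m3 t * xi t) t)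
    (hxi : ∀ t ∈ Set.Ico t0 tstar,
      HasDerivAt xi (-((xi t)^2 + 1) * (2 * p t - m1 t)) t)
    (hp : ∀ t ∈ Set.Ico t0 tstar,
      HasDerivAt p (-((xi t)^2 + 1) * (1 + m2 t * m3 t - 2 * (m3 t)^2 * xi t)) t)
    (hcoll : Tendsto xi (nhdsWithin tstar (Set.Iio tstar)) atTop) :
    MeasureTheory.IntegrableOn
      (fun t => Real.sqrt ((deriv m1 t)^2 + (deriv m2 t)^2 + (deriv m3 t)^2))
      (Set.Ico t0 tstar) := by
  -- conserved quantities
  have hC := aux_const t0 tstar (fun t => m1 t ^ 2 + m2 t ^ 2 + m3 t ^ 2) (by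
    intro t ht
    have hd0 := (((hm1 t ht).pow 2).add ((hm2 t ht).pow 2)).add ((hm3 t ht).pow 2)
    refine HasDerivAt.congr_deriv hd0 ?_
    try simp only [Pi.mul_apply, Nat.cast_ofNat]
    ring)
  have hH := aux_const t0 tstar (fun t => p t ^ 2 - m1 t * p t - xi t - m2 t * m3 t * xi t
      + (m3 t * xi t) ^ 2) (by
    intro t ht
    have hd0 := (((((hp t ht).pow 2).sub ((hm1 t ht).mul (hp t ht))).sub (hxi t ht)).sub
      (((hm2 t ht).mul (hm3 t ht)).mul (hxi t ht))).add (((hm3 t ht).mul (hxi t ht)).pow 2)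
    refine HasDerivAt.congr_deriv hd0 ?_
    try simp only [Pi.mul_apply, Nat.cast_ofNat]
    ring)
  beta_reduce at hC hH
  generalize m1 t0 ^ 2 + m2 t0 ^ 2 + m3 t0 ^ 2 = C at hC
  generalize p t0 ^ 2 - m1 t0 * p t0 - xi t0 - m2 t0 * m3 t0 * xi t0
      + (m3 t0 * xi t0) ^ 2 = h at hH
  set T := tstar - t0 with hT
  have hTpos : 0 < T := sub_pos.2 ht0
  obtain ⟨M, hM1, hMC⟩ : ∃ M : ℝ, 1 ≤ M ∧ C ≤ M ^ 2 := by
    refine ⟨|C| + 1, by linarith [abs_nonneg C], ?_⟩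
    nlinarith [abs_nonneg C, le_abs_self C]
  have hb1 : ∀ t ∈ Set.Ico t0 tstar, m1 t ^ 2 ≤ M ^ 2 := fun t ht => by
    nlinarith [hC t ht, sq_nonneg (m2 t), sq_nonneg (m3 t)]
  have hb2 : ∀ t ∈ Set.Ico t0 tstar, m2 t ^ 2 ≤ M ^ 2 := fun t ht => by
    nlinarith [hC t ht, sq_nonneg (m1 t), sq_nonneg (m3 t)]
  have hb3 : ∀ t ∈ Set.Ico t0 tstar, m3 t ^ 2 ≤ M ^ 2 := fun t ht => by
    nlinarith [hC t ht, sq_nonneg (m2 t), sq_nonneg (m1 t)]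
  -- choice of t1
  obtain ⟨t1, ht1, hbig⟩ : ∃ t1 ∈ Set.Ico t0 tstar, ∀ t ∈ Set.Ico t1 tstar,
      2 * (|h| + M ^ 2 + 49 * T ^ 2) ≤ xi t := by
    have h1 := hcoll.eventually (eventually_ge_atTop (2 * (|h| + M ^ 2 + 49 * T ^ 2)))
    rw [eventually_iff, mem_nhdsLT_iff_exists_Ioo_subset] at h1
    obtain ⟨l, hl, hsub⟩ := h1
    have hl : l < tstar := hl
    obtain ⟨c, hc1, hc2⟩ := exists_between (max_lt ht0 hl)
    exact ⟨c, ⟨(le_max_left _ _).trans hc1.le, hc2⟩, fun t ht =>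
      hsub ⟨lt_of_lt_of_le (lt_of_le_of_lt (le_max_right _ _) hc1) ht.1, ht.2⟩⟩
  have hsub : Set.Ico t1 tstar ⊆ Set.Ico t0 tstar := Set.Ico_subset_Ico_left ht1.1
  set u : ℝ → ℝ := fun t => p t - m1 t / 2 with hu
  set w : ℝ → ℝ := fun t => m3 t * xi t - m2 t / 2 with hw
  have hx1 : ∀ t ∈ Set.Ico t1 tstar, 1 ≤ xi t := fun t ht => by
    nlinarith [hbig t ht, abs_nonneg h, sq_nonneg T]
  have hE : ∀ t ∈ Set.Ico t1 tstar,
      u t ^ 2 + w t ^ 2 = h + xi t + (m1 t ^ 2 + m2 t ^ 2) / 4 := fun t ht => by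
    simp only [hu, hw]
    linear_combination hH t (hsub ht)
  have hEup : ∀ t ∈ Set.Ico t1 tstar, u t ^ 2 + w t ^ 2 ≤ 2 * xi t := fun t ht => by
    nlinarith [hE t ht, hbig t ht, le_abs_self h, abs_nonneg h, sq_nonneg T, hb1 t (hsub ht),
      hb2 t (hsub ht)]
  have hElo : ∀ t ∈ Set.Ico t1 tstar, xi t - |h| ≤ u t ^ 2 + w t ^ 2 := fun t ht => by
    nlinarith [hE t ht, neg_abs_le h, sq_nonneg (m1 t), sq_nonneg (m2 t)]
  -- derivative of L = w / xi
  have hLd : ∀ t ∈ Set.Ico t1 tstar, HasDerivAt (fun t => w t / xi t)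
      ((2 * w t * u t + (w t + m2 t / 2) * (m1 t / 4 - 3 * u t / 2)) / xi t ^ 2) t := by
    intro t ht
    have hne : xi t ≠ 0 := by linarith [hx1 t ht]
    have ht' := hsub ht
    have hwd := ((hm3 t ht').mul (hxi t ht')).sub ((hm2 t ht').div_const 2)
    have hd0 := hwd.div (hxi t ht') hne
    refine HasDerivAt.congr_deriv hd0 ?_
    simp only [hu, hw, Pi.mul_apply, Pi.sub_apply]
    field_simp
    ring
  have hLb : ∀ t ∈ Set.Ico t1 tstar,
      |(2 * w t * u t + (w t + m2 t / 2) * (m1 t / 4 - 3 * u t / 2)) / xi t ^ 2|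
        ≤ 7 / xi t := by
    intro t ht
    have hxp : 0 < xi t := by linarith [hx1 t ht]
    have := aux_alg (u t) (w t) (m1 t) (m2 t) (xi t) M
      (by nlinarith [hbig t ht, abs_nonneg h, sq_nonneg T]) (hb1 t (hsub ht)) (hb2 t (hsub ht))
      (hEup t ht)
    rw [abs_div, abs_of_pos (pow_pos hxp 2), div_le_div_iff₀ (pow_pos hxp 2) hxp]
    nlinarith
  have hsq0 : Tendsto (fun t => -2 / Real.sqrt (xi t)) (nhdsWithin tstar (Set.Iio tstar))
      (nhds 0) :=
    (Real.tendsto_sqrt_atTop.comp hcoll).const_div_atTop (-2)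
  have hL0 : Tendsto (fun t => w t / xi t) (nhdsWithin tstar (Set.Iio tstar)) (nhds 0) := by
    have h2 : Tendsto (fun t => 2 / Real.sqrt (xi t)) (nhdsWithin tstar (Set.Iio tstar))
      (nhds 0) := (Real.tendsto_sqrt_atTop.comp hcoll).const_div_atTop 2
    refine squeeze_zero_norm' ?_ h2
    filter_upwards [Ioo_mem_nhdsLT ht1.2] with t ht
    have ht' : t ∈ Set.Ico t1 tstar := ⟨ht.1.le, ht.2⟩
    have hxp : 0 < xi t := by linarith [hx1 t ht']
    have hs := Real.sqrt_pos.2 hxp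
    have hss := Real.sq_sqrt hxp.le
    have hww : |w t| ≤ 2 * Real.sqrt (xi t) := by
      apply abs_le_of_sq_le_sq _ (by positivity)
      nlinarith [hEup t ht', sq_nonneg (u t)]
    rw [Real.norm_eq_abs, abs_div, abs_of_pos hxp, div_le_div_iff₀ hxp hs]
    nlinarith
  -- at a minimum of xi over the remaining interval, w is bounded
  have hkey : ∀ s ∈ Set.Ico t1 tstar, (∀ r ∈ Set.Ico s tstar, xi s ≤ xi r) → |w s| ≤ 7 * T := by
    intro s hs hmin
    have hxp : 0 < xi s := by linarith [hx1 s hs]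
    have hss : Set.Ico s tstar ⊆ Set.Ico t1 tstar := Set.Ico_subset_Ico_left hs.1
    have h1 := aux_limit s tstar (7 / xi s) hs.2 (by positivity) _ _
      (fun t ht => hLd t (hss ht))
      (fun t ht => (hLb t (hss ht)).trans
        (div_le_div_of_nonneg_left (by norm_num) hxp (hmin t ht))) hL0
    rw [abs_div, abs_of_pos hxp, div_mul_eq_mul_div, div_le_div_iff_of_pos_right hxp] at h1
    refine h1.trans ?_
    have := ht1.1
    have := hs.1
    rw [hT]; linarith
  have hu2 : ∀ s ∈ Set.Ico t1 tstar, |w s| ≤ 7 * T → xi s / 2 ≤ u s ^ 2 := by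
    intro s hs hws
    have : w s ^ 2 ≤ (7 * T) ^ 2 := sq_le_sq' (abs_le.1 hws).1 (abs_le.1 hws).2
    nlinarith [hElo s hs, hbig s hs, sq_nonneg M]
  have hmin : ∀ t ∈ Set.Ico t1 tstar, ∀ r ∈ Set.Ico t tstar, xi t ≤ xi r := by
    intro t ht
    have htt : Set.Ico t tstar ⊆ Set.Ico t1 tstar := Set.Ico_subset_Ico_left ht.1
    obtain ⟨s, hs, hsm⟩ := aux_min t tstar ht.2 xi
      (fun x hx => (hxi x (hsub (htt hx))).continuousAt) hcoll
    have hws := hkey s (htt hs) (fun r hr => hsm r ⟨hs.1.trans hr.1, hr.2⟩)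
    have hus := hu2 s (htt hs) hws
    rcases eq_or_lt_of_le hs.1 with e | hlt
    · rw [← e] at hsm; exact hsm
    · exfalso
      have hloc : IsLocalMin xi s := by
        filter_upwards [Ioo_mem_nhds hlt hs.2] with r hr using hsm r ⟨hr.1.le, hr.2⟩
      have hz := hloc.hasDerivAt_eq_zero (hxi s (hsub (htt hs)))
      have hz2 : u s = 0 := by
        rcases mul_eq_zero.1 hz with h1 | h1
        · nlinarith [sq_nonneg (xi s)]
        · simp only [hu]; linarith
      rw [hz2] at hus
      linarith [hx1 s (htt hs)]
  have hwb : ∀ t ∈ Set.Ico t1 tstar, |w t| ≤ 7 * T := fun t ht => hkey t ht (hmin t ht)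
  have hun : ∀ t ∈ Set.Ico t1 tstar, u t ≤ - (Real.sqrt (xi t) / 2) := by
    intro t ht
    have hxp : 0 < xi t := by linarith [hx1 t ht]
    have h2 := hu2 t ht (hwb t ht)
    have hder : 0 ≤ -((xi t)^2 + 1) * (2 * p t - m1 t) := by
      have hd := (hxi t (hsub ht)).hasDerivWithinAt (s := Set.Ioi t)
      rw [hasDerivWithinAt_iff_tendsto_slope' (by simp)] at hd
      refine ge_of_tendsto hd ?_
      filter_upwards [Ioo_mem_nhdsGT ht.2] with r hr
      rw [slope_def_field]
      exact div_nonneg (sub_nonneg.2 (hmin t ht r ⟨hr.1.le, hr.2⟩)) (sub_nonneg.2 hr.1.le)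
    have hneg : u t ≤ 0 := by
      by_contra hc
      push Not at hc
      have : 2 * p t - m1 t = 2 * u t := by simp only [hu]; ring
      rw [this] at hder
      nlinarith [mul_pos (by positivity : 0 < xi t ^ 2 + 1) hc]
    have : Real.sqrt (xi t) / 2 ≤ - u t := by
      apply le_of_sq_le_sq _ (by linarith)
      rw [div_pow, Real.sq_sqrt hxp.le]
      nlinarith
    linarith
  -- integrability of a majorant
  have hgd : ∀ t ∈ Set.Ico t1 tstar, HasDerivAt (fun t => -2 / Real.sqrt (xi t))
      ((-((xi t)^2 + 1) * (2 * p t - m1 t)) / (xi t * Real.sqrt (xi t))) t := by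
    intro t ht
    have hxp : 0 < xi t := by linarith [hx1 t ht]
    have hs := Real.sqrt_pos.2 hxp
    have hd0 := (hasDerivAt_const t (-2 : ℝ)).div ((hxi t (hsub ht)).sqrt hxp.ne') hs.ne'
    refine HasDerivAt.congr_deriv hd0 ?_
    rw [Real.sq_sqrt hxp.le]
    field_simp
    ring
  have hgx : ∀ t ∈ Set.Ico t1 tstar,
      xi t ≤ (-((xi t)^2 + 1) * (2 * p t - m1 t)) / (xi t * Real.sqrt (xi t)) := by
    intro t ht
    have hxp : 0 < xi t := by linarith [hx1 t ht]
    have hs := Real.sqrt_pos.2 hxp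
    rw [le_div_iff₀ (by positivity)]
    have h1 : 2 * p t - m1 t = 2 * u t := by simp only [hu]; ring
    rw [h1]
    have h2 := hun t ht
    have h3 : (xi t ^ 2 + 1) * Real.sqrt (xi t) ≤ (xi t ^ 2 + 1) * (-(2 * u t)) :=
      mul_le_mul_of_nonneg_left (by linarith) (by positivity)
    nlinarith
  have hgi := aux_integrable t1 tstar ht1.2 _ _ hgd
    (fun t ht => le_trans (by linarith [hx1 t ht]) (hgx t ht)) hsq0
  set F : ℝ → ℝ := fun t => Real.sqrt ((deriv m1 t)^2 + (deriv m2 t)^2 + (deriv m3 t)^2) with hF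
  have hFm : Measurable F := by
    have := measurable_deriv m1
    have := measurable_deriv m2
    have := measurable_deriv m3
    fun_prop
  have hI2 : MeasureTheory.IntegrableOn F (Set.Ioo t1 tstar) := by
    refine MeasureTheory.Integrable.mono'
      (hgi.const_mul (4 * M * (7 * T) + 4 * M ^ 2 + 4 * M)) hFm.aestronglyMeasurable ?_
    refine (MeasureTheory.ae_restrict_iff' measurableSet_Ioo).2 (Eventually.of_forall ?_)
    intro t ht
    have ht' : t ∈ Set.Ico t1 tstar := ⟨ht.1.le, ht.2⟩
    have ht0' := hsub ht'
    have hM0 : 0 ≤ M := by linarith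
    rw [Real.norm_eq_abs, abs_of_nonneg (Real.sqrt_nonneg _)]
    try simp only [hF]
    rw [(hm1 t ht0').deriv, (hm2 t ht0').deriv, (hm3 t ht0').deriv]
    refine (aux_bound (m1 t) (m2 t) (m3 t) (w t) (p t) (xi t) M (7 * T) (u t) hM0 (hx1 t ht')
      (abs_le_of_sq_le_sq (hb1 t ht0') hM0) (abs_le_of_sq_le_sq (hb2 t ht0') hM0)
      (abs_le_of_sq_le_sq (hb3 t ht0') hM0)
      (hwb t ht') (by nlinarith [hEup t ht', sq_nonneg (w t)]) (by simp only [hu]; ring)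
      rfl).trans ?_
    exact mul_le_mul_of_nonneg_left (hgx t ht') (by positivity)
  have hI1 : MeasureTheory.IntegrableOn F (Set.Icc t0 t1) := by
    have hsub1 : Set.Icc t0 t1 ⊆ Set.Ico t0 tstar := fun x hx => ⟨hx.1, lt_of_le_of_lt hx.2 ht1.2⟩
    have c1 : ContinuousOn m1 (Set.Icc t0 t1) := fun x hx =>
      (hm1 x (hsub1 hx)).continuousAt.continuousWithinAt
    have c2 : ContinuousOn m2 (Set.Icc t0 t1) := fun x hx =>
      (hm2 x (hsub1 hx)).continuousAt.continuousWithinAt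
    have c3 : ContinuousOn m3 (Set.Icc t0 t1) := fun x hx =>
      (hm3 x (hsub1 hx)).continuousAt.continuousWithinAt
    have c4 : ContinuousOn xi (Set.Icc t0 t1) := fun x hx =>
      (hxi x (hsub1 hx)).continuousAt.continuousWithinAt
    have c5 : ContinuousOn p (Set.Icc t0 t1) := fun x hx =>
      (hp x (hsub1 hx)).continuousAt.continuousWithinAt
    have hc : ContinuousOn (fun t =>
        Real.sqrt ((xi t * (-(m2 t)^2 + (m3 t)^2 + 2 * m2 t * m3 t * xi t)) ^ 2
        + (m1 t * m2 t * xi t - m3 t * p t - 2 * m1 t * m3 t * (xi t)^2) ^ 2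
        + (m2 t * p t - m1 t * m3 t * xi t) ^ 2)) (Set.Icc t0 t1) := by
      fun_prop
    refine (hc.integrableOn_Icc).congr_fun ?_ measurableSet_Icc
    intro t ht
    have ht0' := hsub1 ht
    try simp only [hF]
    rw [(hm1 t ht0').deriv, (hm2 t ht0').deriv, (hm3 t ht0').deriv]
  refine (hI1.union hI2).mono_set ?_
  intro t ht
  by_cases h' : t ≤ t1
  · exact Or.inl ⟨ht.1, h'⟩
  · exact Or.inr ⟨not_le.1 h', ht.2⟩
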